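/- arXiv:2307.14566 — 3 statements merged into one kernel-verified Lean document; each statement's English description precedes it below -/
import Mathlib

section
/- Let p be a positive even integer. Then the set of all principal partitions of [p]×[2]×[2] is a single orbit of the group W^(p), and its cardinality is (p-1)!! · 8^{p/2}. -/
/-- Index set `[p] × [2] × [2]`. -/
abbrev Idx (p : ℕ) := Fin p × Fin 2 × Fin 2

/-- `β` and `γ` lie in the same class of the partition `Pt`. -/
def SameClass {p : ℕ} (Pt : Finpartition (Finset.univ : Finset (Idx p))) (β γ : Idx p) : Prop :=
  ∃ P ∈ Pt.parts, β ∈ P ∧ γ ∈ P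

/-- The system of equations `τ(e,0,0)+τ(e,0,1) = τ(e,1,0)+τ(e,1,1)`. -/
def EqCond {p : ℕ} (τ : Idx p → ℕ) : Prop :=
  ∀ e : Fin p, τ (e, 0, 0) + τ (e, 0, 1) = τ (e, 1, 0) + τ (e, 1, 1)

/-- `As(Pt,=,ℓ)`. -/
def AsEq {p : ℕ} (Pt : Finpartition (Finset.univ : Finset (Idx p))) (ℓ : ℕ) :
    Set (Idx p → ℕ) :=
  {τ | (∀ i, τ i < ℓ) ∧ EqCond τ ∧ ∀ β γ, τ β = τ γ ↔ SameClass Pt β γ}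

/-- `As(⪰Pt,=,ℓ)`. -/
def AsGe {p : ℕ} (Pt : Finpartition (Finset.univ : Finset (Idx p))) (ℓ : ℕ) :
    Set (Idx p → ℕ) :=
  {τ | (∀ i, τ i < ℓ) ∧ EqCond τ ∧ ∀ β γ, SameClass Pt β γ → τ β = τ γ}

/-- `Pt` is satisfiable. -/
def Satisfiable {p : ℕ} (Pt : Finpartition (Finset.univ : Finset (Idx p))) : Prop :=
  ∃ τ : Idx p → ℕ, EqCond τ ∧ ∀ β γ, τ β = τ γ ↔ SameClass Pt β γ

/-- `Pt` is globally even, locally odd. -/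
def GELO {p : ℕ} (Pt : Finpartition (Finset.univ : Finset (Idx p))) : Prop :=
  (∀ P ∈ Pt.parts, Even P.card) ∧
    ∀ e : Fin p, ∃ P ∈ Pt.parts, Odd ((P.filter fun x => x.1 = e).card)

/-- `Pt` is contributory. -/
def Contributory {p : ℕ} (Pt : Finpartition (Finset.univ : Finset (Idx p))) : Prop :=
  Satisfiable Pt ∧ GELO Pt

/-- The set of equations met by a class. -/
def eqnsOf {p : ℕ} (P : Finset (Idx p)) : Finset (Fin p) := P.image fun x => x.1

/-- `Pt` is separable: any two classes are equation-identical or equation-disjoint. -/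
def Separable {p : ℕ} (Pt : Finpartition (Finset.univ : Finset (Idx p))) : Prop :=
  ∀ P ∈ Pt.parts, ∀ Q ∈ Pt.parts, eqnsOf P = eqnsOf Q ∨ Disjoint (eqnsOf P) (eqnsOf Q)

/-- The number of classes of the quotient of `Pt` by equation-identicality. -/
def quotCard {p : ℕ} (Pt : Finpartition (Finset.univ : Finset (Idx p))) : ℕ :=
  (Pt.parts.image eqnsOf).card

/-- A twin class. -/
def IsTwin {p : ℕ} (P : Finset (Idx p)) : Prop :=
  ∃ e : Fin p, ∃ s : Fin 2, (e, s, 0) ∈ P ∧ (e, s, 1) ∈ P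

/-- `Pt` is principal. -/
def Principal {p : ℕ} (Pt : Finpartition (Finset.univ : Finset (Idx p))) : Prop :=
  Contributory Pt ∧ Separable Pt ∧ ∀ P ∈ Pt.parts, P.card = 2

/-- Membership in the group `W^(p)` of symmetries. -/
def InW {p : ℕ} (π : Equiv.Perm (Idx p)) : Prop :=
  ∃ ε : Equiv.Perm (Fin p), ∃ σ : Fin p → Equiv.Perm (Fin 2),
    ∃ F : Fin p → Fin 2 → Equiv.Perm (Fin 2),
      ∀ (e : Fin p) (s v : Fin 2),
        π (e, s, v) = (ε e, σ (ε e) s, F (ε e) (σ (ε e) s) v)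

/-- The restriction of `Pt` to `{e} × [2] × [2]`. -/
def restrictTo {p : ℕ} (Pt : Finpartition (Finset.univ : Finset (Idx p))) (e : Fin p) :
    Finset (Finset (Idx p)) :=
  (Pt.parts.image fun P => P.filter fun x => x.1 = e).filter fun Q => Q.Nonempty

/-!
In a principal partition, a class meeting the equation `e` an odd number of times meets it once, so it
joins `e` to a second equation `e'`. By separability all classes meeting `e` do the same, so the
equations are perfectly matched and the terms of matched equations are identified by a bijection of
`[2] × [2]`. Satisfiability means exactly that this bijection preserves the sides of the equations:
the four values in an equation are distinct, so two terms form a side iff their values add up to half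
the total (`side_iff`). Conversely, every such matching with side-preserving bijections gives a
principal partition, with the values `0 + 3 = 1 + 2` shifted differently for each matched pair. A
principal partition is thus the same as a good involution `ρ` of `[p] × [2] × [2]`
(`Principal.exists_good`, `Good.principal`).

There are `(p-1)‼` perfect matchings, the conjugacy class of permutations with `p/2` cycles of length 2,
and each of the `p/2` matched pairs can be glued by the 8 elements of the dihedral group `sideGroup`
(`ncard_principal`). The group `W^(p)` acts by conjugation on good involutions (`Good.conj`, `Pairs.map`),
transitively because matchings are conjugate and gluings can be aligned one pair at a time
(`exists_conj`).
-/

/-! ### Principal partitions as good involutions -/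

/-- A good involution: it pairs every term with a term of another equation, and maps equations to
equations and sides of equations (terms with the same `e` and `s`) to sides. Since `ρ` is its own
inverse, the one-way implications suffice. -/
def Good {p : ℕ} (ρ : Idx p → Idx p) : Prop :=
  (∀ x, ρ (ρ x) = x) ∧ (∀ x, (ρ x).1 ≠ x.1) ∧
    (∀ x y, x.1 = y.1 → (ρ x).1 = (ρ y).1) ∧
    ∀ x y, x.1 = y.1 → x.2.1 = y.2.1 → (ρ x).2.1 = (ρ y).2.1

/-- The classes of `Pt` are the orbits `{x, ρ x}` of the involution `ρ`. -/
def Pairs {p : ℕ} (Pt : Finpartition (Finset.univ : Finset (Idx p))) (ρ : Idx p → Idx p) : Prop :=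
  Pt.parts = Finset.univ.image fun x => {x, ρ x}

lemma Pairs.mem_parts {p : ℕ} {Pt : Finpartition (Finset.univ : Finset (Idx p))}
    {ρ : Idx p → Idx p} (h : Pairs Pt ρ) {P : Finset (Idx p)} :
    P ∈ Pt.parts ↔ ∃ x, P = {x, ρ x} := by
  rw [h]; simp [eq_comm]

lemma Pairs.sameClass_iff {p : ℕ} {Pt : Finpartition (Finset.univ : Finset (Idx p))}
    {ρ : Idx p → Idx p} (h : Pairs Pt ρ) (hi : ∀ x, ρ (ρ x) = x) (x y : Idx p) :
    SameClass Pt x y ↔ y = x ∨ y = ρ x := by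
  constructor
  · rintro ⟨P, hP, hx, hy⟩
    obtain ⟨z, rfl⟩ := h.mem_parts.1 hP
    simp only [Finset.mem_insert, Finset.mem_singleton] at hx hy
    have := hi z
    grind
  · intro hy
    exact ⟨{x, ρ x}, h.mem_parts.2 ⟨x, rfl⟩, by simp, by simpa using hy⟩

lemma exists_pairs {p : ℕ} {ρ : Idx p → Idx p} (hi : ∀ x, ρ (ρ x) = x) :
    ∃ Pt : Finpartition (Finset.univ : Finset (Idx p)), Pairs Pt ρ := by
  refine ⟨Finpartition.ofExistsUnique (Finset.univ.image fun x => {x, ρ x}) (by simp) ?_ ?_, rfl⟩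
  · intro x _
    refine ⟨{x, ρ x}, by simp, ?_⟩
    rintro Q ⟨hQ, hx⟩
    obtain ⟨z, -, rfl⟩ := Finset.mem_image.1 hQ
    simp only [Finset.mem_insert, Finset.mem_singleton] at hx
    rcases hx with rfl | rfl
    · rfl
    · rw [hi, Finset.pair_comm]
  · simp only [Finset.mem_image, not_exists, not_and]
    intro x _ hx
    exact Finset.insert_ne_empty _ _ hx

lemma pairs_unique {p : ℕ} {Pt : Finpartition (Finset.univ : Finset (Idx p))}
    {ρ ρ' : Idx p → Idx p} (hρ : Good ρ) (hρ' : Good ρ') (h : Pairs Pt ρ) (h' : Pairs Pt ρ') :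
    ρ = ρ' := by
  funext x
  have h1 := (h.sameClass_iff hρ.1 x (ρ x)).2 (Or.inr rfl)
  rcases (h'.sameClass_iff hρ'.1 x (ρ x)).1 h1 with h2 | h2
  · exact absurd (congrArg Prod.fst h2) (hρ.2.1 x)
  · exact h2

/-- If the four terms of an equation have distinct values, then the sides of the equation can be
read off from the values: two terms form a side iff their sum is half the total. -/
lemma side_iff (h : Fin 2 × Fin 2 → ℕ) (hinj : Function.Injective h)
    (heq : h (0, 0) + h (0, 1) = h (1, 0) + h (1, 1)) {x y : Fin 2 × Fin 2} (hxy : x ≠ y) :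
    x.1 = y.1 ↔ 2 * (h x + h y) = ∑ z, h z := by
  have h1 : h (0, 0) ≠ h (1, 0) := fun H => by simpa using hinj H
  have h2 : h (0, 0) ≠ h (1, 1) := fun H => by simpa using hinj H
  have hs : ∑ z, h z = h (0, 0) + h (0, 1) + (h (1, 0) + h (1, 1)) := by
    simp [Fintype.sum_prod_type]
  rw [hs]
  obtain ⟨a, b⟩ := x
  obtain ⟨c, d⟩ := y
  fin_cases a <;> fin_cases b <;> fin_cases c <;> fin_cases d <;> simp at hxy ⊢ <;> omega

/-- An odd intersection with equation `e` is a single term, whose class then joins `e` to another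
equation `m e`. Separability forces every class meeting `e` to join `e` to `m e`, and `side_iff`
shows that the resulting bijection between the terms preserves sides. -/
lemma Principal.exists_good {p : ℕ} {Pt : Finpartition (Finset.univ : Finset (Idx p))}
    (hP : Principal Pt) : ∃ ρ, Good ρ ∧ Pairs Pt ρ := by
  obtain ⟨⟨⟨τ, hτ, hτc⟩, -, hodd⟩, hsep, hcard⟩ := hP
  have hex : ∀ x, ∃ y, y ≠ x ∧ ({x, y} : Finset (Idx p)) ∈ Pt.parts := by
    intro x
    have hx : x ∈ Pt.part x := Pt.mem_part (Finset.mem_univ x)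
    have hm : Pt.part x ∈ Pt.parts := Pt.part_mem.2 (Finset.mem_univ x)
    obtain ⟨a, b, hab, he⟩ := Finset.card_eq_two.1 (hcard _ hm)
    rw [he] at hx hm
    simp only [Finset.mem_insert, Finset.mem_singleton] at hx
    rcases hx with rfl | rfl
    · exact ⟨b, hab.symm, hm⟩
    · exact ⟨a, hab, by rwa [Finset.pair_comm]⟩
  choose ρ hne hmem using hex
  have huniq : ∀ {P : Finset (Idx p)} {x : Idx p}, P ∈ Pt.parts → x ∈ P → P = {x, ρ x} :=
    fun hP hx => Pt.eq_of_mem_parts hP (hmem _) hx (by simp)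
  have hinv : ∀ x, ρ (ρ x) = x := by
    intro x
    have h1 : ({x, ρ x} : Finset (Idx p)) = {ρ x, ρ (ρ x)} := huniq (hmem x) (by simp)
    have h2 : ρ (ρ x) ∈ ({x, ρ x} : Finset (Idx p)) := by rw [h1]; simp
    simp only [Finset.mem_insert, Finset.mem_singleton] at h2
    exact h2.resolve_right (hne _)
  have hpairs : Pairs Pt ρ := by
    ext P
    simp only [Finset.mem_image, Finset.mem_univ, true_and]
    constructor
    · intro hP
      obtain ⟨x, hx⟩ := Pt.nonempty_of_mem_parts hP
      exact ⟨x, (huniq hP hx).symm⟩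
    · rintro ⟨x, rfl⟩
      exact hmem x
  have heqn : ∀ x, eqnsOf {x, ρ x} = {x.1, (ρ x).1} := by
    intro x; simp [eqnsOf]
  have hfib : ∀ e, ∃ e', e' ≠ e ∧ ∀ z : Idx p, z.1 = e → (ρ z).1 = e' := by
    intro e
    obtain ⟨P, hP, ho⟩ := hodd e
    obtain ⟨x, hx⟩ := Finset.card_pos.1 ho.pos
    obtain ⟨hxP, rfl⟩ := Finset.mem_filter.1 hx
    have hPx := huniq hP hxP
    have hne' : (ρ x).1 ≠ x.1 := by
      intro h
      rw [hPx, Finset.filter_true_of_mem (by simp [h]), Finset.card_pair (hne x).symm] at ho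
      exact absurd ho (by decide)
    refine ⟨(ρ x).1, hne', ?_⟩
    · intro z hz
      rcases hsep _ (hmem x) _ (hmem z) with h | h
      · rw [heqn, heqn, hz] at h
        have : (ρ x).1 ∈ ({x.1, (ρ z).1} : Finset (Fin p)) := by rw [← h]; simp
        simp only [Finset.mem_insert, Finset.mem_singleton] at this
        exact (this.resolve_left hne').symm
      · rw [heqn, heqn, hz] at h
        simp at h
  choose m hm hρm using hfib
  have hτρ : ∀ x y, τ x = τ y ↔ y = x ∨ y = ρ x := fun x y =>
    (hτc x y).trans (hpairs.sameClass_iff hinv x y)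
  have hinj : ∀ e, Function.Injective fun z => τ (e, z) := by
    intro e z w hzw
    rcases (hτρ _ _).1 hzw with h | h
    · exact (Prod.ext_iff.1 h).2.symm
    · exact absurd (hρm e (e, z) rfl) (by rw [← h]; exact (hm e).symm)
  have hside : ∀ x y : Idx p, x ≠ y → x.1 = y.1 →
      (x.2.1 = y.2.1 ↔ 2 * (τ x + τ y) = ∑ z, τ (x.1, z)) := by
    rintro ⟨e, z⟩ ⟨e', w⟩ hne he
    obtain rfl : e = e' := he
    exact side_iff (fun z => τ (e, z)) (hinj e) (hτ e) (by rintro rfl; exact hne rfl)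
  have hsum : ∀ e, ∑ z, τ (m e, z) = ∑ z, τ (e, z) := by
    intro e
    have hb : Function.Bijective fun z => (ρ (e, z)).2 := by
      refine Finite.injective_iff_bijective.1 fun z w hzw => ?_
      have : ρ (e, z) = ρ (e, w) :=
        Prod.ext ((hρm e _ rfl).trans (hρm e _ rfl).symm) hzw
      have := congrArg ρ this
      rw [hinv, hinv] at this
      exact (Prod.ext_iff.1 this).2
    rw [← hb.sum_comp]
    refine Finset.sum_congr rfl fun z _ => ?_
    rw [eq_comm, hτρ]
    exact Or.inr (Prod.ext (hρm e _ rfl).symm rfl)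
  have hE : ∀ x y : Idx p, x.1 = y.1 → (ρ x).1 = (ρ y).1 := fun x y h =>
    (hρm _ x h).trans (hρm _ y rfl).symm
  refine ⟨ρ, ⟨hinv, fun x h => hm x.1 ((hρm _ x rfl).symm.trans h), hE, ?_⟩, hpairs⟩
  intro x y hxy hs
  by_cases hxe : x = y
  · rw [hxe]
  have hne2 : ρ x ≠ ρ y := fun h => hxe (by rw [← hinv x, h, hinv])
  rw [hside _ _ hne2 (hE x y hxy), hρm _ x rfl, hsum, ← (hτρ x (ρ x)).2 (Or.inr rfl),
    ← (hτρ y (ρ y)).2 (Or.inr rfl)]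
  exact (hside x y hxe hxy).1 hs

/-- Four distinct values `0 + 3 = 1 + 2` satisfying a single equation. -/
def sideVal (z : Fin 2 × Fin 2) : ℕ := if z.1 = 0 then 3 * z.2.val else 1 + z.2.val

lemma sideVal_add {x y : Fin 2 × Fin 2} (h : x.1 = y.1) (hne : x ≠ y) :
    sideVal x + sideVal y = 3 := by
  revert x y; decide

lemma sideVal_lt (x : Fin 2 × Fin 2) : sideVal x < 4 := by
  revert x; decide

lemma sideVal_inj : Function.Injective sideVal := by
  unfold Function.Injective; decide

/-- A satisfying assignment gives matched equations the values of `sideVal`, shifted by a multiple of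
4 that depends on the smaller of the two indices and separates different pairs. -/
lemma Good.satisfiable {p : ℕ} {Pt : Finpartition (Finset.univ : Finset (Idx p))}
    {ρ : Idx p → Idx p} (hρ : Good ρ) (h : Pairs Pt ρ) : Satisfiable Pt := by
  obtain ⟨hi, hn, hE, hS⟩ := hρ
  -- `r x` is the member of `{x, ρ x}` with the smaller equation index.
  set r : Idx p → Idx p := fun x => if x.1 < (ρ x).1 then x else ρ x with hr
  have hrr : ∀ x, r (ρ x) = r x := by
    intro x
    have := hn x
    simp only [hr, hi]
    grind
  have hrx : ∀ x, r x = x ∨ r x = ρ x := by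
    intro x; simp only [hr]; grind
  have hsum : ∀ e s, 4 * ((r (e, s, 0)).1 : ℕ) + sideVal (r (e, s, 0)).2 +
      (4 * ((r (e, s, 1)).1 : ℕ) + sideVal (r (e, s, 1)).2) =
        8 * ((r (e, 0, 0)).1 : ℕ) + 3 := by
    intro e s
    have h0 := hE (e, s, 0) (e, 0, 0) rfl
    have h1 := hE (e, s, 1) (e, 0, 0) rfl
    have hne : ρ (e, s, 0) ≠ ρ (e, s, 1) := fun H => by
      have := congrArg ρ H
      rw [hi, hi] at this
      simp at this
    have hs := hS (e, s, 0) (e, s, 1) rfl rfl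
    simp only [hr, h0, h1]
    split_ifs with hlt
    · have := sideVal_add (x := (s, 0)) (y := (s, 1)) rfl (by simp)
      simp only; omega
    · have := sideVal_add hs (fun H => hne (Prod.ext (h0.trans h1.symm) H))
      rw [h0, h1]; omega
  refine ⟨fun x => 4 * ((r x).1 : ℕ) + sideVal (r x).2, ?_, ?_⟩
  · intro e
    simp only
    rw [hsum, hsum]
  · intro x y
    rw [h.sameClass_iff hi]
    constructor
    · intro hxy
      have l1 := sideVal_lt (r x).2
      have l2 := sideVal_lt (r y).2
      simp only at hxy
      have : r x = r y := Prod.ext (Fin.ext (by omega)) (sideVal_inj (by omega))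
      have hxx := hi x
      have hyy := hi y
      rcases hrx x with h1 | h1 <;> rcases hrx y with h2 | h2 <;> grind
    · rintro (rfl | rfl)
      · rfl
      · simp only [hrr]

lemma Good.principal {p : ℕ} {Pt : Finpartition (Finset.univ : Finset (Idx p))}
    {ρ : Idx p → Idx p} (hρ : Good ρ) (h : Pairs Pt ρ) : Principal Pt := by
  have hsat := hρ.satisfiable h
  obtain ⟨hi, hn, hE, hS⟩ := hρ
  have hne : ∀ x, x ≠ ρ x := fun x H => hn x (congrArg Prod.fst H.symm)
  have hcard : ∀ P ∈ Pt.parts, P.card = 2 := by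
    intro P hP
    obtain ⟨x, rfl⟩ := h.mem_parts.1 hP
    exact Finset.card_pair (hne x)
  refine ⟨⟨hsat, fun P hP => by rw [hcard P hP]; decide, fun e => ?_⟩, ?_, hcard⟩
  · refine ⟨_, h.mem_parts.2 ⟨(e, 0, 0), rfl⟩, ?_⟩
    rw [Finset.filter_insert, Finset.filter_singleton, if_pos rfl, if_neg (hn (e, 0, 0))]
    simp
  · intro P hP Q hQ
    obtain ⟨x, rfl⟩ := h.mem_parts.1 hP
    obtain ⟨y, rfl⟩ := h.mem_parts.1 hQ
    have heqn : ∀ x, eqnsOf {x, ρ x} = {x.1, (ρ x).1} := by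
      intro x; simp [eqnsOf]
    rw [heqn, heqn]
    have e1 := hE x y
    have e2 := hE x (ρ y)
    have e3 := hE (ρ x) y
    have e4 := hE (ρ x) (ρ y)
    rw [hi] at e2 e3 e4
    rw [hi] at e4
    by_cases h1 : x.1 = y.1
    · left; rw [e1 h1, h1]
    by_cases h2 : x.1 = (ρ y).1
    · left; rw [e2 h2, h2, Finset.pair_comm]
    right
    simp only [Finset.disjoint_insert_left, Finset.disjoint_singleton_left, Finset.mem_insert,
      Finset.mem_singleton]
    exact ⟨by tauto, by rintro (H | H) <;> grind⟩

/-! ### The action of the symmetry group -/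

/-- Elements of `W^(p)` preserve the relations of lying in the same equation and on the same side. -/
lemma InW.rel {p : ℕ} {π : Equiv.Perm (Idx p)} (hπ : InW π) :
    (∀ x y, (π x).1 = (π y).1 ↔ x.1 = y.1) ∧
      ∀ x y, x.1 = y.1 → ((π x).2.1 = (π y).2.1 ↔ x.2.1 = y.2.1) := by
  obtain ⟨ε, σ, F, h⟩ := hπ
  constructor
  · rintro ⟨e, s, v⟩ ⟨e', s', v'⟩
    simp [h]
  · rintro ⟨e, s, v⟩ ⟨e', s', v'⟩ he
    obtain rfl : e = e' := he
    simp [h]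

lemma Good.conj {p : ℕ} {ρ : Idx p → Idx p} (hρ : Good ρ) {π : Equiv.Perm (Idx p)}
    (hπ : InW π) : Good fun x => π (ρ (π.symm x)) := by
  obtain ⟨hi, hn, hE, hS⟩ := hρ
  obtain ⟨h1, h2⟩ := hπ.rel
  have h1' : ∀ x y, (π.symm x).1 = (π.symm y).1 ↔ x.1 = y.1 := fun x y => by
    rw [← h1]; simp
  refine ⟨fun x => by simp [hi], fun x hx => ?_, fun x y hxy => ?_, fun x y hxy hs => ?_⟩
  · apply hn (π.symm x)
    rw [← h1]; simpa using hx
  · exact (h1 _ _).2 (hE _ _ ((h1' _ _).2 hxy))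
  · have h3 := (h1' x y).2 hxy
    refine (h2 _ _ (hE _ _ h3)).2 (hS _ _ h3 ?_)
    rw [← h2 _ _ h3]; simpa using hs

lemma Pairs.map {p : ℕ} {Pt Qt : Finpartition (Finset.univ : Finset (Idx p))}
    {ρ : Idx p → Idx p} (h : Pairs Pt ρ) (π : Equiv.Perm (Idx p)) :
    (Qt.parts = Pt.parts.image fun P => P.image π) ↔ Pairs Qt fun x => π (ρ (π.symm x)) := by
  have : (Pt.parts.image fun P => P.image π) =
      Finset.univ.image fun x => {x, π (ρ (π.symm x))} := by
    rw [h, Finset.image_image]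
    ext P
    simp only [Finset.mem_image, Finset.mem_univ, true_and, Function.comp_apply,
      Finset.image_insert, Finset.image_singleton]
    constructor
    · rintro ⟨x, rfl⟩; exact ⟨π x, by simp⟩
    · rintro ⟨x, rfl⟩; exact ⟨π.symm x, by simp⟩
  rw [this, Pairs]

/-! ### Parametrization of good involutions -/

/-- The permutations of `[2] × [2]` that map the set of two sides `{s} × [2]` to itself: the dihedral
group of order 8, acting on the four terms of a single equation. -/
def sideGroup : Subgroup (Equiv.Perm (Fin 2 × Fin 2)) where
  carrier := {d | ∀ x y, x.1 = y.1 ↔ (d x).1 = (d y).1}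
  one_mem' := by simp
  mul_mem' := by
    intro a b ha hb x y
    rw [hb x y, ha]; rfl
  inv_mem' := by
    intro a ha x y
    simpa using (ha (a⁻¹ x) (a⁻¹ y)).symm

lemma card_sideGroup : Nat.card sideGroup = 8 := by
  have h : Fintype.card {d : Equiv.Perm (Fin 2 × Fin 2) //
      ∀ x y, x.1 = y.1 ↔ (d x).1 = (d y).1} = 8 := by decide +kernel
  rw [← h, ← Nat.card_eq_fintype_card]
  rfl

/-- The elements of `sideGroup` have the wreath product form used in `InW`. -/
lemma exists_of_mem_sideGroup {d : Equiv.Perm (Fin 2 × Fin 2)} (hd : d ∈ sideGroup) :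
    ∃ (σ : Equiv.Perm (Fin 2)) (F : Fin 2 → Equiv.Perm (Fin 2)),
      ∀ s v, d (s, v) = (σ s, F (σ s) v) := by
  have hσ : Function.Injective fun s => (d (s, 0)).1 := fun s t h => (hd (s, 0) (t, 0)).2 h
  have hF : ∀ s, Function.Injective fun v => (d (s, v)).2 := fun s v w h => by
    have : d (s, v) = d (s, w) := Prod.ext ((hd (s, v) (s, w)).1 rfl) h
    simpa using d.injective this
  refine ⟨Equiv.ofBijective _ (Finite.injective_iff_bijective.1 hσ), fun t =>
    Equiv.ofBijective _ (Finite.injective_iff_bijective.1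
      (hF ((Equiv.ofBijective _ (Finite.injective_iff_bijective.1 hσ)).symm t))), fun s v => ?_⟩
  refine Prod.ext ((hd (s, v) (s, 0)).1 rfl) ?_
  simp only [Equiv.ofBijective_apply]
  rw [Equiv.ofBijective_symm_apply_apply (fun s => (d (s, 0)).1)]

/-- Perfect matchings of `[p]`, encoded as fixed-point-free involutions. -/
abbrev Matching (p : ℕ) := {m : Equiv.Perm (Fin p) // ∀ e, m (m e) = e ∧ m e ≠ e}

/-- The ways of identifying the terms of matched equations by a side-preserving bijection. The
bijection is recorded from both ends of each matched pair, whence the compatibility condition. -/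
abbrev Gluing {p : ℕ} (m : Matching p) :=
  {g : Fin p → sideGroup // ∀ e, g (m.1 e) = (g e)⁻¹}

/-- The involution of `[p] × [2] × [2]` given by a matching and a gluing along it. -/
def glue {p : ℕ} (m : Matching p) (g : Gluing m) (x : Idx p) : Idx p :=
  (m.1 x.1, (g.1 x.1).1 x.2)

lemma glue_good {p : ℕ} (m : Matching p) (g : Gluing m) : Good (glue m g) := by
  refine ⟨fun x => ?_, fun x => (m.2 x.1).2, fun x y h => ?_, fun x y h hs => ?_⟩
  · simp [glue, m.2, g.2]
  · simp [glue, h]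
  · simp only [glue, h]
    exact ((g.1 y.1).2 _ _).1 hs

/-- With `glue_injective`, this parametrizes the good involutions by a matching and a gluing. -/
lemma Good.exists_glue {p : ℕ} {ρ : Idx p → Idx p} (hρ : Good ρ) :
    ∃ (m : Matching p) (g : Gluing m), glue m g = ρ := by
  obtain ⟨hi, hn, hE, hS⟩ := hρ
  have hm : ∀ x, (ρ (x.1, 0)).1 = (ρ x).1 := fun x => hE _ _ rfl
  have hmm : Function.Involutive fun e => (ρ (e, 0)).1 := fun e => by
    simp only
    rw [hm, hi]
  have hpair : ∀ e z, ((ρ (e, 0)).1, (ρ (e, z)).2) = ρ (e, z) := fun e z =>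
    Prod.ext (hm (e, z)) rfl
  let d : Fin p → Equiv.Perm (Fin 2 × Fin 2) := fun e =>
    { toFun := fun z => (ρ (e, z)).2
      invFun := fun z => (ρ ((ρ (e, 0)).1, z)).2
      left_inv := fun z => by simp only [hpair, hi]
      right_inv := fun z => by
        have := hpair (ρ (e, 0)).1 z
        rw [hm, hi] at this
        change (e, _) = _ at this
        change (ρ (e, (ρ ((ρ (e, 0)).1, z)).2)).2 = z
        rw [this, hi] }
  have hd : ∀ e, d e ∈ sideGroup := fun e x y => by
    refine ⟨fun h => hS (e, x) (e, y) rfl h, fun h => ?_⟩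
    have := hS (ρ (e, x)) (ρ (e, y)) (hE _ _ rfl) h
    rwa [hi, hi] at this
  refine ⟨⟨hmm.toPerm _, fun e => ⟨hmm e, hn (e, 0)⟩⟩,
    ⟨fun e => ⟨d e, hd e⟩, fun e => ?_⟩, ?_⟩
  · refine Subtype.ext (Equiv.ext fun z => ?_)
    rfl
  · funext x
    exact hpair x.1 x.2

lemma glue_injective {p : ℕ} :
    Function.Injective fun q : Σ m : Matching p, Gluing m => glue q.1 q.2 := by
  rintro ⟨m, g⟩ ⟨m', g'⟩ h
  have hx : ∀ e z, glue m g (e, z) = glue m' g' (e, z) := fun e z => congrFun h _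
  obtain rfl : m = m' := Subtype.ext (Equiv.ext fun e => congrArg Prod.fst (hx e 0))
  obtain rfl : g = g' := Subtype.ext (funext fun e => Subtype.ext (Equiv.ext fun z =>
    congrArg Prod.snd (hx e z)))
  rfl

/-! ### Counting -/

lemma card_lower {p : ℕ} (m : Matching p) : Nat.card {e // e < m.1 e} = p / 2 := by
  classical
  rw [Nat.card_eq_fintype_card, Fintype.card_subtype]
  have h1 : (Finset.univ.filter fun e => e < m.1 e).card =
      (Finset.univ.filter fun e => ¬ e < m.1 e).card := by
    refine Finset.card_bij (fun e _ => m.1 e) ?_ (fun a _ b _ h => m.1.injective h) ?_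
    · intro e he
      simp only [Finset.mem_filter, Finset.mem_univ, true_and, (m.2 e).1] at he ⊢
      exact he.asymm
    · intro e he
      simp only [Finset.mem_filter, Finset.mem_univ, true_and, not_lt] at he
      refine ⟨m.1 e, ?_, (m.2 e).1⟩
      simp only [Finset.mem_filter, Finset.mem_univ, true_and, (m.2 e).1]
      exact lt_of_le_of_ne he (m.2 e).2
  have h2 := Finset.card_filter_add_card_filter_not (s := (Finset.univ : Finset (Fin p)))
    (fun e => e < m.1 e)
  rw [Finset.card_univ, Fintype.card_fin] at h2
  omega

/-- A gluing is freely determined by its values at the smaller index of each matched pair. -/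
def gluingEquiv {p : ℕ} (m : Matching p) : Gluing m ≃ ({e // e < m.1 e} → sideGroup) where
  toFun g e := g.1 e.1
  invFun h := ⟨fun e => if he : e < m.1 e then h ⟨e, he⟩ else
      (h ⟨m.1 e, by rw [(m.2 e).1]; exact lt_of_le_of_ne (not_lt.1 he) (m.2 e).2⟩)⁻¹, by
    intro e
    have h1 := (m.2 e).1
    have h2 := (m.2 e).2
    by_cases he : e < m.1 e
    · simp only [he, he.asymm, dif_pos, dif_neg, not_false_eq_true, h1]
    · have he' : m.1 e < m.1 (m.1 e) := by rw [h1]; exact lt_of_le_of_ne (not_lt.1 he) h2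
      simp only [he, he', dif_pos, dif_neg, not_false_eq_true, inv_inv]⟩
  left_inv g := by
    refine Subtype.ext (funext fun e => ?_)
    simp only
    split_ifs with he
    · rfl
    · rw [g.2, inv_inv]
  right_inv h := by
    funext e
    simp [e.2]

lemma card_gluing {p : ℕ} (m : Matching p) : Nat.card (Gluing m) = 8 ^ (p / 2) := by
  rw [Nat.card_congr (gluingEquiv m), Nat.card_fun, card_sideGroup, card_lower]

/-- Perfect matchings form one conjugacy class of the symmetric group. This gives both their number
and the permutation of the equations needed in `exists_conj`. -/
lemma cycleType_matching {p : ℕ} {m : Equiv.Perm (Fin p)} (he : Even p) :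
    (∀ e, m (m e) = e ∧ m e ≠ e) ↔ m.cycleType = Multiset.replicate (p / 2) 2 := by
  have hp2 : p / 2 * 2 = p := Nat.div_mul_cancel he.two_dvd
  constructor
  · intro h
    have h1 : m ^ 2 = 1 := Equiv.ext fun e => by simpa [pow_two] using (h e).1
    have h2 := Equiv.Perm.pow_prime_eq_one_iff.1 h1
    have h3 : m.support = Finset.univ := Finset.eq_univ_iff_forall.2 fun e =>
      Equiv.Perm.mem_support.2 (h e).2
    have h4 := m.sum_cycleType
    rw [h3, Finset.card_univ, Fintype.card_fin, Multiset.eq_replicate_card.2 h2,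
      Multiset.sum_replicate, smul_eq_mul] at h4
    rw [Multiset.eq_replicate_card.2 h2]
    congr 1
    omega
  · intro h
    have h1 : m ^ 2 = 1 := Equiv.Perm.pow_prime_eq_one_iff.2 fun c hc => by
      rw [h] at hc; exact Multiset.eq_of_mem_replicate hc
    have h3 : m.support = Finset.univ := by
      rw [← Finset.card_eq_iff_eq_univ, ← m.sum_cycleType, h, Multiset.sum_replicate, smul_eq_mul,
        hp2, Fintype.card_fin]
    intro e
    refine ⟨by simpa [pow_two] using Equiv.congr_fun h1 e, ?_⟩
    rw [← Equiv.Perm.mem_support, h3]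
    exact Finset.mem_univ e

lemma card_matching {p : ℕ} (hp : 0 < p) (he : Even p) :
    Nat.card (Matching p) = Nat.doubleFactorial (p - 1) := by
  classical
  have h1 : Nat.card (Matching p) = (Finset.univ.filter fun m : Equiv.Perm (Fin p) =>
      m.cycleType = Multiset.replicate (p / 2) 2).card := by
    rw [← Fintype.card_subtype, ← Nat.card_eq_fintype_card]
    exact Nat.card_congr (Equiv.subtypeEquivRight fun m => cycleType_matching he)
  obtain ⟨k, rfl⟩ : ∃ k, p = 2 * (k + 1) := ⟨p / 2 - 1, by have := he.two_dvd; omega⟩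
  have hk : 2 * (k + 1) / 2 = k + 1 := by omega
  have h2 := Equiv.Perm.card_of_cycleType_mul_eq (Fin (2 * (k + 1)))
    (Multiset.replicate (k + 1) 2)
  rw [hk] at h1
  rw [← h1, Fintype.card_fin, if_pos ⟨by simp; omega,
    fun a ha => (Multiset.eq_of_mem_replicate ha).ge⟩, Multiset.toFinset_replicate,
    if_neg (by omega), Finset.prod_singleton, Multiset.count_replicate_self,
    Multiset.sum_replicate, Multiset.prod_replicate, smul_eq_mul,
    show 2 * (k + 1) - (k + 1) * 2 = 0 by omega, Nat.factorial_zero, one_mul,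
    ← Nat.doubleFactorial_two_mul] at h2
  have h3 := Nat.factorial_eq_mul_doubleFactorial (2 * k + 1)
  have h4 : 0 < Nat.doubleFactorial (2 * (k + 1)) := Nat.doubleFactorial_pos _
  refine Nat.eq_of_mul_eq_mul_right h4 (h2.trans ?_)
  exact h3.trans (mul_comm _ _)

lemma ncard_principal {p : ℕ} (hp : 0 < p) (he : Even p) :
    {Pt : Finpartition (Finset.univ : Finset (Idx p)) | Principal Pt}.ncard =
      Nat.doubleFactorial (p - 1) * 8 ^ (p / 2) := by
  classical
  have hex : ∀ q : Σ m : Matching p, Gluing m, ∃ Pt, Pairs Pt (glue q.1 q.2) := fun q =>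
    exists_pairs (glue_good q.1 q.2).1
  choose Φ hΦ using hex
  have hinj : Function.Injective Φ := fun q q' h => glue_injective <|
    pairs_unique (glue_good _ _) (glue_good _ _) (hΦ q) (h ▸ hΦ q')
  have hrange : {Pt : Finpartition (Finset.univ : Finset (Idx p)) | Principal Pt} =
      Set.range Φ := by
    ext Pt
    constructor
    · intro h
      obtain ⟨ρ, hρ, hP⟩ := h.exists_good
      obtain ⟨m, g, rfl⟩ := hρ.exists_glue
      exact ⟨⟨m, g⟩, Finpartition.ext ((hΦ ⟨m, g⟩).trans hP.symm)⟩
    · rintro ⟨q, rfl⟩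
      exact (glue_good _ _).principal (hΦ q)
  rw [hrange, ← Nat.card_coe_set_eq, Nat.card_range_of_injective hinj, Nat.card_sigma]
  simp only [card_gluing, Finset.sum_const, Finset.card_univ, smul_eq_mul,
    ← Nat.card_eq_fintype_card]
  rw [card_matching hp he]

/-! ### Transitivity -/

/-- Any two good involutions are conjugate under `W^(p)`. The permutation `ε` of the equations
conjugates the underlying matchings; within the equations, one acts trivially on the smaller index
of each matched pair, and the gluings then force the action on the larger one. -/
lemma exists_conj {p : ℕ} (he : Even p) {ρ ρ' : Idx p → Idx p} (hρ : Good ρ) (hρ' : Good ρ') :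
    ∃ π : Equiv.Perm (Idx p), InW π ∧ ∀ x, π (ρ x) = ρ' (π x) := by
  obtain ⟨m, g, rfl⟩ := hρ.exists_glue
  obtain ⟨m', g', rfl⟩ := hρ'.exists_glue
  have hc : IsConj m.1 m'.1 := Equiv.Perm.isConj_iff_cycleType_eq.2
    (((cycleType_matching he).1 m.2).trans ((cycleType_matching he).1 m'.2).symm)
  obtain ⟨ε, hε⟩ := isConj_iff.1 hc
  have hε' : ∀ e, ε (m.1 e) = m'.1 (ε e) := fun e => by rw [← hε]; simp
  let δ : Fin p → sideGroup := fun e =>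
    if e < m.1 e then 1 else g'.1 (ε (m.1 e)) * (g.1 (m.1 e))⁻¹
  -- Acting by `δ` intertwines the two gluings, over `ε`.
  have hδ : ∀ e, δ (m.1 e) * g.1 e = g'.1 (ε e) * δ e := by
    intro e
    have h1 := (m.2 e).1
    have h2 := (m.2 e).2
    by_cases hl : e < m.1 e
    · simp [δ, h1, hl, hl.asymm]
    · have hl' : m.1 e < e := lt_of_le_of_ne (not_lt.1 hl) h2
      simp [δ, h1, hl, hl', hε', g.2, g'.2]
  let π : Equiv.Perm (Idx p) :=
    { toFun := fun x => (ε x.1, (δ x.1).1 x.2)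
      invFun := fun x => (ε.symm x.1, (δ (ε.symm x.1)).1.symm x.2)
      left_inv := fun x => by simp
      right_inv := fun x => by simp }
  refine ⟨π, ?_, fun x => ?_⟩
  · choose σ F hF using fun e => exists_of_mem_sideGroup (δ e).2
    refine ⟨ε, fun e => σ (ε.symm e), fun e => F (ε.symm e), fun e s v => ?_⟩
    simp [π, hF]
  · refine Prod.ext (hε' x.1) ?_
    exact Equiv.congr_fun (congrArg Subtype.val (hδ x.1)) x.2

/-- For positive even `p`, the principal partitions of `[p]×[2]×[2]` form a single
orbit of the group `W^(p)`, of cardinality `(p-1)‼ · 8^(p/2)`. -/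
theorem principal_partitions_orbit (p : ℕ) (hp : 0 < p) (he : Even p) :
    {Pt : Finpartition (Finset.univ : Finset (Idx p)) | Principal Pt}.Nonempty ∧
    (∀ Pt Qt : Finpartition (Finset.univ : Finset (Idx p)),
      Principal Pt → Principal Qt →
        ∃ π : Equiv.Perm (Idx p), InW π ∧
          Qt.parts = Pt.parts.image fun P => P.image π) ∧
    (∀ Pt Qt : Finpartition (Finset.univ : Finset (Idx p)), Principal Pt →
      ∀ π : Equiv.Perm (Idx p), InW π →
        Qt.parts = (Pt.parts.image fun P => P.image π) → Principal Qt) ∧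
    {Pt : Finpartition (Finset.univ : Finset (Idx p)) | Principal Pt}.ncard =
      Nat.doubleFactorial (p - 1) * 8 ^ (p / 2) := by
  have hcard := ncard_principal hp he
  refine ⟨Set.nonempty_of_ncard_ne_zero ?_, ?_, ?_, hcard⟩
  · rw [hcard]
    have := Nat.doubleFactorial_pos (p - 1)
    positivity
  · intro Pt Qt hPt hQt
    obtain ⟨ρ, hρ, hP⟩ := hPt.exists_good
    obtain ⟨ρ', hρ', hQ⟩ := hQt.exists_good
    obtain ⟨π, hπ, hc⟩ := exists_conj he hρ hρ'
    refine ⟨π, hπ, (hP.map π).2 ?_⟩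
    simpa [hc] using hQ
  · intro Pt Qt hPt π hπ h
    obtain ⟨ρ, hρ, hP⟩ := hPt.exists_good
    exact (hρ.conj hπ).principal ((hP.map π).1 h)
end

section
/- Let p be a positive integer, let 𝒫 be a contributory and separable partition of [p]×[2]×[2], and let 𝔓 be the quotient of 𝒫 by equation-identicality. Then for every ℓ ∈ ℕ, |As(𝒫,=,ℓ)| ≤ |As(⪰𝒫,=,ℓ)| ≤ ℓ^{|𝒫| - |𝔓|}. -/
/-- Two solutions of equation `e` that agree off `P`, and differ by a constant on `P`, agree on `P`
as soon as `P` meets the equation an odd number of times: the constant is multiplied by the odd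
signed count of the occurrences of `P`. -/
lemma eq_of_odd {p : ℕ} (P : Finset (Idx p)) (e : Fin p)
    (hodd : Odd ((P.filter fun x => x.1 = e).card)) (τ τ' : Idx p → ℕ)
    (hτ : EqCond τ) (hτ' : EqCond τ') (a a' : ℕ)
    (ha : ∀ x ∈ P, τ x = a) (ha' : ∀ x ∈ P, τ' x = a')
    (hoff : ∀ s v, (e, s, v) ∉ P → τ (e, s, v) = τ' (e, s, v)) : a = a' := by
  have hcard : (P.filter fun x => x.1 = e).card =
      ∑ s : Fin 2, ∑ v : Fin 2, if (e, s, v) ∈ P then 1 else 0 := by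
    have himage : (P.filter fun x => x.1 = e) =
        ((Finset.univ : Finset (Fin 2 × Fin 2)).filter fun y => (e, y) ∈ P).image
          (fun y => (e, y)) := by
      ext ⟨e', s, v⟩
      simp only [Finset.mem_filter, Finset.mem_image, Finset.mem_univ, true_and, Prod.mk.injEq]
      constructor
      · rintro ⟨h, rfl⟩
        exact ⟨(s, v), h, rfl, rfl⟩
      · rintro ⟨⟨s', v'⟩, h, rfl, h2⟩
        cases h2
        exact ⟨h, rfl⟩
    rw [himage, Finset.card_image_of_injective _ (fun _ _ h => (Prod.mk.inj h).2),
      Finset.card_filter, Fintype.sum_prod_type]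
  rw [hcard] at hodd
  simp only [Fin.sum_univ_two] at hodd
  have h1 := hτ e
  have h2 := hτ' e
  have key : ∀ s v, ((e, s, v) ∈ P ∧ τ (e, s, v) = a ∧ τ' (e, s, v) = a') ∨
      ((e, s, v) ∉ P ∧ τ (e, s, v) = τ' (e, s, v)) := fun s v => by
    by_cases h : (e, s, v) ∈ P
    · exact .inl ⟨h, ha _ h, ha' _ h⟩
    · exact .inr ⟨h, hoff s v h⟩
  rw [Nat.odd_iff] at hodd
  rcases key 0 0 with ⟨m1, k1⟩ | ⟨m1, k1⟩ <;> rcases key 0 1 with ⟨m2, k2⟩ | ⟨m2, k2⟩ <;>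
    rcases key 1 0 with ⟨m3, k3⟩ | ⟨m3, k3⟩ <;> rcases key 1 1 with ⟨m4, k4⟩ | ⟨m4, k4⟩ <;>
    simp only [m1, m2, m3, m4, if_true, if_false] at hodd <;> omega

lemma exists_odd_representative {p : ℕ}
    (Pt : Finpartition (Finset.univ : Finset (Idx p)))
    (hodd : ∀ e : Fin p, ∃ P ∈ Pt.parts, Odd ((P.filter fun x => x.1 = e).card))
    (hs : Separable Pt) (c : Pt.parts.image eqnsOf) :
    ∃ P ∈ Pt.parts, eqnsOf P = c.1 ∧ ∃ e ∈ c.1, Odd ((P.filter fun x => x.1 = e).card) := by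
  obtain ⟨c, hc⟩ := c
  obtain ⟨Q, hQ, rfl⟩ := Finset.mem_image.1 hc
  obtain ⟨x, hx⟩ := Pt.nonempty_of_mem_parts hQ
  have hxQ : x.1 ∈ eqnsOf Q := Finset.mem_image_of_mem _ hx
  obtain ⟨P, hP, hPodd⟩ := hodd x.1
  obtain ⟨y, hy⟩ := Finset.card_pos.1 hPodd.pos
  rw [Finset.mem_filter] at hy
  have hxP : x.1 ∈ eqnsOf P := hy.2 ▸ Finset.mem_image_of_mem _ hy.1
  exact ⟨P, hP, (hs P hP Q hQ).resolve_right
    (fun h => Finset.disjoint_left.1 h hxP hxQ), x.1, hxQ, hPodd⟩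

/-- For a contributory separable partition `𝒫` with quotient `𝔓`,
`|As(𝒫,=,ℓ)| ≤ |As(⪰𝒫,=,ℓ)| ≤ ℓ^(|𝒫| - |𝔓|)`. -/
theorem card_le_of_separable {p : ℕ} (hp : 0 < p)
    (Pt : Finpartition (Finset.univ : Finset (Idx p)))
    (hc : Contributory Pt) (hs : Separable Pt) (ℓ : ℕ) :
    (AsEq Pt ℓ).ncard ≤ (AsGe Pt ℓ).ncard ∧
      (AsGe Pt ℓ).ncard ≤ ℓ ^ (Pt.parts.card - quotCard Pt) := by
  classical
  choose r hrP hrc hre using exists_odd_representative Pt hc.2.2 hs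
  have hrinj : Function.Injective r := fun c c' h => Subtype.ext (by rw [← hrc c, ← hrc c', h])
  let R : Finset (Finset (Idx p)) := Finset.univ.image r
  have hRcard : R.card = quotCard Pt := by
    rw [Finset.card_image_of_injective _ hrinj, Finset.card_univ, Fintype.card_coe]
    rfl
  have hRsub : R ⊆ Pt.parts := by
    intro P hP
    obtain ⟨c, -, rfl⟩ := Finset.mem_image.1 hP
    exact hrP c
  let F := Pt.parts \ R
  have hFcard : F.card = Pt.parts.card - quotCard Pt := by
    rw [Finset.card_sdiff_of_subset hRsub, hRcard]
  have hne : ∀ P : F, P.1.Nonempty := fun P =>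
    Pt.nonempty_of_mem_parts (Finset.mem_sdiff.1 P.2).1
  let f : AsGe Pt ℓ → (F → Fin ℓ) := fun τ P => ⟨τ.1 (hne P).choose, τ.2.1 _⟩
  have hf : Function.Injective f := by
    rintro ⟨τ, hτℓ, hτe, hτc⟩ ⟨τ', hτℓ', hτe', hτc'⟩ h
    have hfree : ∀ P ∈ Pt.parts, P ∉ R → ∀ x ∈ P, τ x = τ' x := by
      intro P hP hPR x hx
      have hPF : P ∈ F := Finset.mem_sdiff.2 ⟨hP, hPR⟩
      have h0 : τ (hne ⟨P, hPF⟩).choose = τ' (hne ⟨P, hPF⟩).choose :=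
        congrArg Fin.val (congrFun h ⟨P, hPF⟩)
      have hm := (hne ⟨P, hPF⟩).choose_spec
      rw [hτc x _ ⟨P, hP, hx, hm⟩, h0, hτc' x _ ⟨P, hP, hx, hm⟩]
    refine Subtype.ext (funext fun x => ?_)
    obtain ⟨P, hP, hx⟩ := Pt.exists_mem (Finset.mem_univ x)
    by_cases hPR : P ∈ R
    · obtain ⟨c, -, rfl⟩ := Finset.mem_image.1 hPR
      obtain ⟨e, hec, hodd⟩ := hre c
      refine eq_of_odd (r c) e hodd τ τ' hτe hτe' _ _ (fun y hy => hτc _ _ ⟨_, hP, hy, hx⟩)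
        (fun y hy => hτc' _ _ ⟨_, hP, hy, hx⟩) fun s v hsv => ?_
      obtain ⟨Q, hQ, hy⟩ := Pt.exists_mem (Finset.mem_univ (e, s, v))
      refine hfree Q hQ (fun hQR => ?_) _ hy
      -- a discarded class meeting equation `e` is equation-identical to `r c`, hence equals it
      obtain ⟨c', -, rfl⟩ := Finset.mem_image.1 hQR
      have heQ : e ∈ eqnsOf (r c') := Finset.mem_image.2 ⟨_, hy, rfl⟩
      have heP : e ∈ eqnsOf (r c) := by rwa [hrc c]
      have hid := (hs _ hQ _ hP).resolve_right fun hd => Finset.disjoint_left.1 hd heQ heP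
      rw [hrc, hrc] at hid
      exact hsv (Subtype.ext hid ▸ hy)
    · exact hfree P hP hPR x hx
  have hfin : (AsGe Pt ℓ).Finite := Finite.of_injective f hf
  refine ⟨Set.ncard_le_ncard (fun τ hτ => ⟨hτ.1, hτ.2.1, fun β γ => (hτ.2.2 β γ).2⟩) hfin, ?_⟩
  rw [← Nat.card_coe_set_eq, ← hFcard]
  refine (Nat.card_le_card_of_injective f hf).trans_eq ?_
  simp
end

section
/- Let p be a positive even integer and let 𝒫 be a principal partition of [p]×[2]×[2]. Then for every ℓ ∈ ℕ, |As(⪰𝒫,=,ℓ)| = ((2ℓ³ + ℓ)/3)^{p/2}. -/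
/-! ### Solutions of `a + b = c + d` in `[ℓ]` -/

/-- The pairs in `[ℓ] × [ℓ]` with sum `s`. -/
def pairsWithSum (ℓ s : ℕ) : Finset (ℕ × ℕ) :=
  (Finset.range ℓ ×ˢ Finset.range ℓ).filter fun q => q.1 + q.2 = s

lemma card_pairsWithSum (ℓ s : ℕ) :
    (pairsWithSum ℓ s).card = min (s + 1) ℓ - (s + 1 - ℓ) := by
  have h : pairsWithSum ℓ s = (Finset.Ico (s + 1 - ℓ) (min (s + 1) ℓ)).image
      fun a => (a, s - a) := by
    ext ⟨a, b⟩
    simp only [pairsWithSum, Finset.mem_filter, Finset.mem_product, Finset.mem_range,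
      Finset.mem_image, Finset.mem_Ico, Prod.mk.injEq]
    constructor
    · rintro ⟨⟨h1, h2⟩, h3⟩
      exact ⟨a, by omega, rfl, by omega⟩
    · rintro ⟨c, h1, rfl, rfl⟩
      omega
  rw [h, Finset.card_image_of_injective _ fun a b hab => (Prod.mk.inj hab).1, Nat.card_Ico]

lemma sum_sq_eq (ℓ : ℕ) :
    3 * (∑ s ∈ Finset.range ℓ, (s + 1) ^ 2 + ∑ s ∈ Finset.range ℓ, s ^ 2) = 2 * ℓ ^ 3 + ℓ := by
  induction ℓ with
  | zero => simp
  | succ n ih =>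
    rw [Finset.sum_range_succ, Finset.sum_range_succ]
    linarith

/-- The quadruples `((a, b), (c, d))` in `[ℓ]` with `a + b = c + d`. -/
def quadFinset (ℓ : ℕ) : Finset ((ℕ × ℕ) × (ℕ × ℕ)) :=
  ((Finset.range ℓ ×ˢ Finset.range ℓ) ×ˢ (Finset.range ℓ ×ˢ Finset.range ℓ)).filter
    fun q => q.1.1 + q.1.2 = q.2.1 + q.2.2

lemma card_quadFinset (ℓ : ℕ) : (quadFinset ℓ).card = (2 * ℓ ^ 3 + ℓ) / 3 := by
  have hmaps : ∀ q ∈ quadFinset ℓ, q.1.1 + q.1.2 ∈ Finset.range (ℓ + ℓ) := by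
    intro q hq
    simp only [quadFinset, Finset.mem_filter, Finset.mem_product, Finset.mem_range] at hq ⊢
    omega
  have hfib : ∀ s, (quadFinset ℓ).filter (fun q => q.1.1 + q.1.2 = s) =
      pairsWithSum ℓ s ×ˢ pairsWithSum ℓ s := by
    intro s
    ext q
    simp only [quadFinset, pairsWithSum, Finset.mem_filter, Finset.mem_product, Finset.mem_range]
    omega
  rw [Finset.card_eq_sum_card_fiberwise (f := fun q => q.1.1 + q.1.2)
    (t := Finset.range (ℓ + ℓ)) (fun q hq => hmaps q hq)]
  simp only [hfib, Finset.card_product, card_pairsWithSum]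
  rw [Finset.sum_range_add, ← sum_sq_eq, Nat.mul_div_cancel_left _ (by norm_num)]
  congr 1
  · refine Finset.sum_congr rfl fun s hs => ?_
    have := Finset.mem_range.1 hs
    rw [show min (s + 1) ℓ - (s + 1 - ℓ) = s + 1 by omega, sq]
  · rw [← Finset.sum_range_reflect]
    refine Finset.sum_congr rfl fun s hs => ?_
    have := Finset.mem_range.1 hs
    rw [show min (ℓ + (ℓ - 1 - s) + 1) ℓ - (ℓ + (ℓ - 1 - s) + 1 - ℓ) = s by omega, sq]

/-- The solutions in `[ℓ]` of a single equation, as functions on `[2] × [2]`. -/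
def Quad (ℓ : ℕ) : Type :=
  {q : Fin 2 × Fin 2 → ℕ // (∀ i, q i < ℓ) ∧ q (0, 0) + q (0, 1) = q (1, 0) + q (1, 1)}

lemma card_quad (ℓ : ℕ) : Nat.card (Quad ℓ) = (2 * ℓ ^ 3 + ℓ) / 3 := by
  rw [← card_quadFinset, ← Set.ncard_coe_finset, ← Nat.card_coe_set_eq]
  refine Nat.card_congr
    { toFun := fun q => ⟨((q.1 (0, 0), q.1 (0, 1)), (q.1 (1, 0), q.1 (1, 1))), ?_⟩
      invFun := fun t => ⟨fun i => ![![t.1.1.1, t.1.1.2], ![t.1.2.1, t.1.2.2]] i.1 i.2, ?_⟩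
      left_inv := ?_
      right_inv := ?_ }
  · have h := q.2
    simp [quadFinset, h.1, h.2]
  · have h := t.2
    simp only [quadFinset, Finset.coe_filter, Finset.mem_product, Finset.mem_range,
      Set.mem_ofPred_eq] at h
    refine ⟨?_, by simpa using h.2⟩
    rintro ⟨i, j⟩
    fin_cases i <;> fin_cases j <;> simp <;> omega
  · intro q
    apply Subtype.ext
    funext ⟨i, j⟩
    fin_cases i <;> fin_cases j <;> rfl
  · intro t
    rfl

/-! ### Structure of principal partitions -/

/-- In a principal partition the two elements of each class are exchanged by a map `φ` which
covers a fixed-point free map `f` of the equations. -/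
lemma exists_partner {p : ℕ} {Pt : Finpartition (Finset.univ : Finset (Idx p))}
    (h : Principal Pt) :
    ∃ (φ : Idx p → Idx p) (f : Fin p → Fin p),
      (∀ x y, SameClass Pt x y ↔ y = x ∨ y = φ x) ∧
      (∀ x, (φ x).1 = f x.1) ∧ ∀ e, f e ≠ e := by
  obtain ⟨⟨-, -, hodd⟩, hsep, hcard⟩ := h
  have h1 : ∀ x : Idx p, ∃ y, Pt.part x = {x, y} := by
    intro x
    have hx := Pt.mem_part (Finset.mem_univ x)
    obtain ⟨a, b, -, hab⟩ := Finset.card_eq_two.1 (hcard _ (Pt.part_mem.2 (Finset.mem_univ x)))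
    rw [hab] at hx ⊢
    rcases Finset.mem_insert.1 hx with rfl | hx
    · exact ⟨b, rfl⟩
    · obtain rfl := Finset.mem_singleton.1 hx
      exact ⟨a, Finset.pair_comm _ _⟩
  choose φ hφ using h1
  have h2 : ∀ e : Fin p, ∃ e', e' ≠ e ∧ ∀ x : Idx p, x.1 = e → (φ x).1 = e' := by
    intro e
    obtain ⟨P, hP, hPo⟩ := hodd e
    have hex : ∃ y ∈ P, y.1 ≠ e := by
      by_contra! hcon
      rw [Finset.filter_true_of_mem hcon, hcard P hP] at hPo
      exact absurd hPo (by decide)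
    obtain ⟨y, hyP, hy⟩ := hex
    obtain ⟨z, hz⟩ := Finset.card_pos.1 hPo.pos
    obtain ⟨hzP, hze⟩ := Finset.mem_filter.1 hz
    refine ⟨y.1, hy, fun x hx => ?_⟩
    have hmem : y.1 ∈ eqnsOf (Pt.part x) := by
      have heq : eqnsOf P = eqnsOf (Pt.part x) := by
        refine (hsep P hP _ (Pt.part_mem.2 (Finset.mem_univ x))).resolve_right fun hd => ?_
        have hze' : e ∈ eqnsOf P := Finset.mem_image.2 ⟨z, hzP, hze⟩
        refine Finset.disjoint_left.1 hd hze' ?_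
        exact Finset.mem_image.2 ⟨x, Pt.mem_part (Finset.mem_univ x), hx⟩
      rw [← heq]
      exact Finset.mem_image_of_mem _ hyP
    rw [hφ x] at hmem
    simp only [eqnsOf, Finset.image_insert, Finset.image_singleton, Finset.mem_insert,
      Finset.mem_singleton] at hmem
    exact (hmem.resolve_left (hx ▸ hy)).symm
  choose f hf hφf using h2
  refine ⟨φ, f, fun x y => ?_, fun x => hφf _ x rfl, hf⟩
  have : SameClass Pt x y ↔ y ∈ Pt.part x := by
    constructor
    · rintro ⟨P, hP, hx, hy⟩
      rwa [Pt.part_eq_of_mem hP hx]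
    · exact fun hy => ⟨_, Pt.part_mem.2 (Finset.mem_univ x), Pt.mem_part (Finset.mem_univ x), hy⟩
  rw [this, hφ x]
  simp

/-- Four distinct numbers split in at most one way into two pairs of equal sum: a permutation `π`
of the unknowns which preserves the equation for one solution `t` with distinct values preserves
it for every solution. -/
lemma eq_comp_of_injective {t q : Fin 2 × Fin 2 → ℕ} {π : Fin 2 × Fin 2 → Fin 2 × Fin 2}
    (ht : Function.Injective t) (hπ : Function.Injective π)
    (h1 : t (0, 0) + t (0, 1) = t (1, 0) + t (1, 1))
    (h2 : t (π (0, 0)) + t (π (0, 1)) = t (π (1, 0)) + t (π (1, 1)))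
    (hq : q (0, 0) + q (0, 1) = q (1, 0) + q (1, 1)) :
    q (π (0, 0)) + q (π (0, 1)) = q (π (1, 0)) + q (π (1, 1)) := by
  have key : ∀ a b c d : Fin 2 × Fin 2, a ≠ b → a ≠ c → a ≠ d → b ≠ c → b ≠ d → c ≠ d →
      t a + t b = t c + t d → q a + q b = q c + q d := by
    have n1 : t (0, 0) ≠ t (1, 0) := fun h => by simpa using ht h
    have n2 : t (0, 0) ≠ t (1, 1) := fun h => by simpa using ht h
    have n3 : t (0, 1) ≠ t (1, 0) := fun h => by simpa using ht h
    have n4 : t (0, 1) ≠ t (1, 1) := fun h => by simpa using ht h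
    rintro ⟨a, a'⟩ ⟨b, b'⟩ ⟨c, c'⟩ ⟨d, d'⟩
    fin_cases a <;> fin_cases a' <;> fin_cases b <;> fin_cases b' <;> fin_cases c <;>
      fin_cases c' <;> fin_cases d <;> fin_cases d' <;> simp <;> omega
  exact key _ _ _ _ (hπ.ne (by decide)) (hπ.ne (by decide)) (hπ.ne (by decide))
    (hπ.ne (by decide)) (hπ.ne (by decide)) (hπ.ne (by decide)) h2

/-- For an assignment constant on classes, the equation at `e` implies the one at `f e`. -/
lemma eq_transfer {p : ℕ} {Pt : Finpartition (Finset.univ : Finset (Idx p))}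
    (hsat : Satisfiable Pt) {φ : Idx p → Idx p} {f : Fin p → Fin p}
    (hφ : ∀ x y, SameClass Pt x y ↔ y = x ∨ y = φ x) (hφf : ∀ x, (φ x).1 = f x.1)
    (hf : ∀ e, f e ≠ e) (hφφ : ∀ x, φ (φ x) = x) (hff : ∀ e, f (f e) = e)
    {τ : Idx p → ℕ} (hτ : ∀ x, τ (φ x) = τ x) {e : Fin p}
    (he : τ (e, 0, 0) + τ (e, 0, 1) = τ (e, 1, 0) + τ (e, 1, 1)) :
    τ (f e, 0, 0) + τ (f e, 0, 1) = τ (f e, 1, 0) + τ (f e, 1, 1) := by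
  obtain ⟨t, ht, htc⟩ := hsat
  have hπ : ∀ s, φ (f e, s) = (e, (φ (f e, s)).2) := fun s =>
    Prod.ext ((hφf _).trans (hff e)) rfl
  have hval : ∀ u : Idx p → ℕ, (∀ x, u (φ x) = u x) → ∀ s, u (e, (φ (f e, s)).2) = u (f e, s) :=
    fun u hu s => by rw [← hπ, hu]
  have htφ : ∀ x, t (φ x) = t x := fun x => ((htc _ _).2 ((hφ _ _).2 (Or.inr rfl))).symm
  have hinj : Function.Injective fun s => t (e, s) := by
    intro s s' hs
    rcases (hφ _ _).1 ((htc _ _).1 hs) with h | h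
    · exact (Prod.mk.inj h).2.symm
    · exact absurd ((congrArg Prod.fst h).trans (hφf _)).symm (hf e)
  have hπinj : Function.Injective fun s => (φ (f e, s)).2 := by
    intro s s' hs
    have h : φ (f e, s) = φ (f e, s') := by
      rw [hπ s, hπ s']
      exact congrArg _ hs
    have h' := congrArg φ h
    rw [hφφ, hφφ] at h'
    exact (Prod.mk.inj h').2
  have := eq_comp_of_injective (q := fun s => τ (e, s)) hinj hπinj (ht e)
    (by simpa only [hval t htφ] using ht (f e)) he
  simpa only [hval τ hτ] using this

/-- A fixed-point free involution of `[p]` has `p / 2` orbits, each represented by its smaller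
element. -/
lemma card_lt_involution {p : ℕ} {f : Fin p → Fin p} (hf : ∀ e, f e ≠ e)
    (hff : ∀ e, f (f e) = e) : Fintype.card {e // e < f e} = p / 2 := by
  have h1 : Fintype.card {e // e < f e} = Fintype.card {e // ¬ e < f e} := by
    refine Fintype.card_congr
      { toFun := fun e => ⟨f e.1, ?_⟩
        invFun := fun e => ⟨f e.1, ?_⟩
        left_inv := fun e => Subtype.ext (hff _)
        right_inv := fun e => Subtype.ext (hff _) }
    · rw [hff]
      exact e.2.le.not_gt
    · rw [hff]
      exact lt_of_le_of_ne (not_lt.1 e.2) (hf _)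
  have h2 := Fintype.card_subtype_compl fun e => e < f e
  have h3 := Fintype.card_subtype_le fun e => e < f e
  rw [Fintype.card_fin] at h2 h3
  omega

/-- For a principal partition `𝒫` (with `p` positive and even),
`|As(⪰𝒫,=,ℓ)| = ((2ℓ³ + ℓ)/3)^(p/2)`. -/
theorem asGe_card_of_principal {p : ℕ} (hp : 0 < p) (he : Even p)
    (Pt : Finpartition (Finset.univ : Finset (Idx p)))
    (hprin : Principal Pt) (ℓ : ℕ) :
    (AsGe Pt ℓ).ncard = ((2 * ℓ ^ 3 + ℓ) / 3) ^ (p / 2) := by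
  obtain ⟨φ, f, hφ, hφf, hf⟩ := exists_partner hprin
  have hφφ : ∀ x, φ (φ x) = x := by
    intro x
    obtain ⟨P, hP, h1, h2⟩ := (hφ x (φ x)).2 (Or.inr rfl)
    rcases (hφ (φ x) x).1 ⟨P, hP, h2, h1⟩ with h | h
    · exact absurd ((congrArg Prod.fst h).trans (hφf x)).symm (hf _)
    · exact h.symm
  have hff : ∀ e, f (f e) = e := fun e => by
    have := congrArg Prod.fst (hφφ (e, 0, 0))
    rwa [hφf, hφf] at this
  have hconst : ∀ τ : Idx p → ℕ,
      (∀ β γ, SameClass Pt β γ → τ β = τ γ) ↔ ∀ x, τ (φ x) = τ x := by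
    intro τ
    constructor
    · exact fun h x => (h _ _ ((hφ _ _).2 (Or.inr rfl))).symm
    · intro h β γ hs
      rcases (hφ _ _).1 hs with rfl | rfl
      · rfl
      · exact (h β).symm
  -- Exactly one of `e` and `f e` is the smaller element of its orbit.
  have hlt : ∀ e, f e < f (f e) ↔ ¬ e < f e := fun e => by
    rw [hff, not_lt]
    exact ⟨le_of_lt, fun h => lt_of_le_of_ne h (hf e)⟩
  have hlt' : ∀ {e}, ¬ e < f e → f e < f (f e) := fun {e} => (hlt e).2
  rw [← card_lt_involution hf hff, ← card_quad, ← Nat.card_eq_fintype_card, ← Nat.card_fun,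
    ← Nat.card_coe_set_eq]
  -- The assignment built from solutions at the representatives: the values at the other
  -- equations are transported by `φ`.
  let ext (g : {e // e < f e} → Quad ℓ) (x : Idx p) : ℕ :=
    if h : x.1 < f x.1 then (g ⟨x.1, h⟩).1 x.2 else (g ⟨f x.1, hlt' h⟩).1 (φ x).2
  have ext_pos : ∀ g x (h : x.1 < f x.1), ext g x = (g ⟨x.1, h⟩).1 x.2 :=
    fun g x h => dif_pos h
  have ext_neg : ∀ g x (h : ¬ x.1 < f x.1), ext g x = (g ⟨f x.1, hlt' h⟩).1 (φ x).2 :=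
    fun g x h => dif_neg h
  have ext_φ_neg : ∀ g x, ¬ x.1 < f x.1 → ext g (φ x) = ext g x := by
    intro g x h
    have h' : (φ x).1 < f (φ x).1 := by rw [hφf]; exact hlt' h
    rw [ext_neg g x h, ext_pos g (φ x) h']
    simp only [hφf]
  have ext_φ : ∀ g x, ext g (φ x) = ext g x := by
    intro g x
    by_cases h : x.1 < f x.1
    · have h' : ¬ (φ x).1 < f (φ x).1 := by rw [hφf, hlt]; exact not_not.2 h
      have := ext_φ_neg g (φ x) h'
      rw [hφφ] at this
      exact this.symm
    · exact ext_φ_neg g x h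
  refine Nat.card_congr
    { toFun := fun τ e => ⟨fun s => τ.1 (e.1, s), fun s => τ.2.1 _, τ.2.2.1 e.1⟩
      invFun := fun g => ⟨ext g, ?_, ?_, (hconst _).2 (ext_φ g)⟩
      left_inv := ?_
      right_inv := ?_ }
  · intro x
    by_cases h : x.1 < f x.1
    · rw [ext_pos g x h]
      exact (g _).2.1 _
    · rw [ext_neg g x h]
      exact (g _).2.1 _
  · have hpos : ∀ e, e < f e → ext g (e, 0, 0) + ext g (e, 0, 1) =
        ext g (e, 1, 0) + ext g (e, 1, 1) := by
      intro e h
      simp only [ext_pos g (e, _) h]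
      exact (g ⟨e, h⟩).2.2
    intro e
    by_cases h : e < f e
    · exact hpos e h
    · have := eq_transfer hprin.1.1 hφ hφf hf hφφ hff (ext_φ g) (hpos (f e) (hlt' h))
      rwa [hff] at this
  · intro τ
    apply Subtype.ext
    funext x
    by_cases h : x.1 < f x.1
    · exact ext_pos (fun e => ⟨fun s => τ.1 (e.1, s), fun s => τ.2.1 _, τ.2.2.1 e.1⟩) x h
    · refine (ext_neg (fun e => ⟨fun s => τ.1 (e.1, s), fun s => τ.2.1 _, τ.2.2.1 e.1⟩) x h).trans ?_
      change τ.1 (f x.1, (φ x).2) = τ.1 x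
      rw [← hφf x]
      exact (hconst τ.1).1 τ.2.2.2 x
  · intro g
    funext e
    apply Subtype.ext
    funext s
    exact ext_pos g (e.1, s) e.2
end
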